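/- Let (P, Q) ∈ S_e with H(P_0) < ∞, and suppose the entropy balance H_e(P_0) + E(Q | Q^{P⊗P}) = H_e(P_T) + E(Q | Υ_# Q^{P⊗P}) holds with both sides finite. Then H(P_T) + E(Q | Q^{P⊗P}) + E(Q | Υ_# Q^{P⊗P}) ≥ H(P_0), with equality if and only if Q = Q^{P⊗P}. -/

import Mathlib

open MeasureTheory
open scoped RealInnerProductSpace ENNReal

noncomputable section

/-- Velocity space `ℝ^d`. -/
abbrev Vel (d : ℕ) := EuclideanSpace ℝ (Fin d)

/-- The space `[0,T] × ℝ^{2d} × ℝ^{2d}` of collision data `(t, (v, v_*), (v', v'_*))`. -/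
abbrev Coll (d : ℕ) := ℝ × ((Vel d × Vel d) × (Vel d × Vel d))

/-- The collision flux `Q^{P⊗P}(dt, dv, dv_*, dv', dv'_*) =
dt ½ P_t(dv) P_t(dv_*) ∫ dω B(v−v_*, ω) δ_{v'} δ_{v'_*}`, with hard-sphere kernel
`B(w,ω) = |w·ω|/2` and `dω` the surface measure on the unit sphere. -/
noncomputable def collisionFlux (d : ℕ) (T : ℝ) (P : ℝ → Measure (Vel d)) :
    Measure (Coll d) :=
  ((volume : Measure ℝ).restrict (Set.Icc 0 T)).bind fun t =>
    (2⁻¹ : ℝ≥0∞) •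
      ((((P t).prod (P t)).prod (volume : Measure (Vel d)).toSphere).bind fun q =>
        (ENNReal.ofReal (|⟪q.1.1 - q.1.2, (q.2 : Vel d)⟫| / 2)) •
          Measure.dirac (t, ((q.1.1, q.1.2),
            (q.1.1 - ⟪q.1.1 - q.1.2, (q.2 : Vel d)⟫ • (q.2 : Vel d),
             q.1.2 + ⟪q.1.1 - q.1.2, (q.2 : Vel d)⟫ • (q.2 : Vel d)))))

/-- The involution `Υ` exchanging incoming and outgoing velocity pairs. -/
def ups (d : ℕ) : Coll d → Coll d := fun z => (z.1, (z.2.2, z.2.1))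

/-- The extended relative entropy functional
`E(V | Ṽ) = sup_{φ ∈ C_b} { V(φ) − Ṽ(e^φ − 1) }`. -/
noncomputable def Efun {X : Type*} [MeasurableSpace X] [TopologicalSpace X]
    (V W : Measure X) : EReal :=
  ⨆ φ : BoundedContinuousFunction X ℝ,
    ((∫ x, φ x ∂V - ∫ x, (Real.exp (φ x) - 1) ∂W : ℝ) : EReal)

/-- `H(π) = ∫ f log f dv` for `dπ = f dℓ`. -/
noncomputable def Hfun {d : ℕ} (μ : Measure (Vel d)) : ℝ :=
  ∫ v, Real.log ((μ.rnDeriv volume v).toReal) ∂μ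

/-- The Maxwellian on `ℝ^d` with zero mean and energy `e`. -/
noncomputable def maxwellian (d : ℕ) (e : ℝ) : Measure (Vel d) :=
  volume.withDensity fun v => ENNReal.ofReal
    (((d / (2 * e)) / (2 * Real.pi)) ^ ((d : ℝ) / 2) *
      Real.exp (-(d / (2 * e)) * (‖v‖ ^ 2 / 2)))

/-- `H_e(π) = Ent(π | M_e) + (d/(2e)) (e − π(|v|²/2))`. -/
noncomputable def He (d : ℕ) (e : ℝ) (μ : Measure (Vel d)) : ℝ :=
  (∫ v, Real.log ((μ.rnDeriv (maxwellian d e) v).toReal) ∂μ)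
    + ((d : ℝ) / (2 * e)) * (e - ∫ v, ‖v‖ ^ 2 / 2 ∂μ)

/-!
Since `H_e` and `H` differ by a constant on absolutely continuous probability measures, the entropy
balance reads `H(P_0) + E₁ = H(P_T) + E₂` with `E₁ = E(Q | Q^{P⊗P})` and
`E₂ = E(Q | Υ_# Q^{P⊗P})`. Adding `E₁` to both sides,

  `H(P_T) + E₁ + E₂ = H(P_0) + 2 E₁`,

so the inequality is `E₁ ≥ 0`, and equality means `E₁ = 0`. If `E(V | W) = 0` then, for every
bounded continuous `φ`, the function `t ↦ t V(φ) - W(e^{tφ} - 1)` is maximal at `t = 0`; its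
derivative there is `V(φ) - W(φ)`, hence `V = W`.
-/

section RelativeEntropy

variable {X : Type*} [MeasurableSpace X] [TopologicalSpace X]

lemma Efun_nonneg (V W : Measure X) : 0 ≤ Efun V W :=
  le_iSup_of_le 0 (by simp)

lemma coe_integral_sub_integral_exp_sub_one_le_Efun (V W : Measure X)
    (φ : BoundedContinuousFunction X ℝ) :
    ((∫ x, φ x ∂V - ∫ x, (Real.exp (φ x) - 1) ∂W : ℝ) : EReal) ≤ Efun V W :=
  le_iSup (fun ψ : BoundedContinuousFunction X ℝ =>
    ((∫ x, ψ x ∂V - ∫ x, (Real.exp (ψ x) - 1) ∂W : ℝ) : EReal)) φ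

variable [OpensMeasurableSpace X] {V W : Measure X} [IsFiniteMeasure W]

lemma integrable_exp_mul_boundedContinuousFunction (φ : BoundedContinuousFunction X ℝ) (t : ℝ) :
    Integrable (fun x => Real.exp (t * φ x)) W :=
  ProbabilityTheory.integrable_exp_mul_of_mem_Icc φ.continuous.measurable.aemeasurable
    (ae_of_all _ fun x => abs_le.1 (φ.norm_coe_le_norm x))

lemma hasDerivAt_mgf_zero_boundedContinuousFunction (φ : BoundedContinuousFunction X ℝ) :
    HasDerivAt (ProbabilityTheory.mgf φ W) (∫ x, φ x ∂W) 0 := by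
  have hexp : ProbabilityTheory.integrableExpSet φ W = Set.univ :=
    Set.eq_univ_of_forall (integrable_exp_mul_boundedContinuousFunction φ)
  simpa using ProbabilityTheory.hasDerivAt_mgf (X := φ) (μ := W) (t := 0) (by simp [hexp])

variable (W) in
lemma Efun_self : Efun W W = 0 := by
  refine le_antisymm (iSup_le fun φ => ?_) (Efun_nonneg W W)
  have hexp : Integrable (fun x => Real.exp (φ x)) W := by
    simpa using integrable_exp_mul_boundedContinuousFunction φ 1
  have hle : ∫ x, φ x ∂W ≤ ∫ x, (Real.exp (φ x) - 1) ∂W :=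
    integral_mono (φ.integrable W) (hexp.sub (integrable_const 1))
      fun x => le_sub_iff_add_le.2 (Real.add_one_le_exp (φ x))
  exact_mod_cast sub_nonpos.2 hle

lemma integral_eq_of_Efun_eq_zero (h : Efun V W = 0) (φ : BoundedContinuousFunction X ℝ) :
    ∫ x, φ x ∂V = ∫ x, φ x ∂W := by
  let g : ℝ → ℝ := fun t =>
    t * ∫ x, φ x ∂V - (ProbabilityTheory.mgf φ W t - W.real Set.univ)
  have hg_le (t : ℝ) : g t ≤ 0 := by
    have hE := (coe_integral_sub_integral_exp_sub_one_le_Efun V W (t • φ)).trans_eq h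
    have hmgf : ∫ x, (Real.exp (t * φ x) - 1) ∂W
        = ProbabilityTheory.mgf φ W t - W.real Set.univ := by
      rw [integral_sub (integrable_exp_mul_boundedContinuousFunction φ t) (integrable_const 1)]
      simp [ProbabilityTheory.mgf]
    simp only [BoundedContinuousFunction.coe_smul, smul_eq_mul, integral_const_mul, hmgf] at hE
    exact_mod_cast hE
  have hg_max : IsLocalMax g 0 :=
    Filter.Eventually.of_forall fun t => (hg_le t).trans_eq (by simp [g])
  have hg_deriv : HasDerivAt g (1 * ∫ x, φ x ∂V - ∫ x, φ x ∂W) 0 :=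
    ((hasDerivAt_id 0).mul_const _).sub
      ((hasDerivAt_mgf_zero_boundedContinuousFunction φ).sub_const _)
  linarith [hg_max.hasDerivAt_eq_zero hg_deriv]

end RelativeEntropy

lemma Efun_eq_zero_iff {X : Type*} [MeasurableSpace X] [TopologicalSpace X]
    [HasOuterApproxClosed X] [BorelSpace X] {V W : Measure X} [IsFiniteMeasure V]
    [IsFiniteMeasure W] : Efun V W = 0 ↔ V = W := by
  refine ⟨fun h => ?_, ?_⟩
  · exact ext_of_forall_integral_eq_of_IsFiniteMeasure (integral_eq_of_Efun_eq_zero h)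
  · rintro rfl
    exact Efun_self V

section CollisionFlux

lemma half_abs_inner_sub_le {E : Type*} [NormedAddCommGroup E] [InnerProductSpace ℝ E]
    (v w : E) {ω : E} (hω : ‖ω‖ = 1) :
    |⟪v - w, ω⟫| / 2 ≤ 1 + ‖v‖ ^ 2 / 2 + ‖w‖ ^ 2 / 2 := by
  have hinner : |⟪v - w, ω⟫| ≤ ‖v‖ + ‖w‖ :=
    calc |⟪v - w, ω⟫| ≤ ‖v - w‖ * ‖ω‖ := abs_real_inner_le_norm _ _
      _ ≤ ‖v‖ + ‖w‖ := by rw [hω, mul_one]; exact norm_sub_le v w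
  linarith [two_mul_le_add_sq ‖v‖ 1, two_mul_le_add_sq ‖w‖ 1, sq_nonneg ‖v‖, sq_nonneg ‖w‖]

lemma lintegral_half_abs_inner_sub_le {E : Type*} [NormedAddCommGroup E] [InnerProductSpace ℝ E]
    [MeasurableSpace E] (μ : Measure E) [IsProbabilityMeasure μ]
    (σ : Measure (Metric.sphere (0 : E) 1)) [IsFiniteMeasure σ]
    (hmom : Integrable (fun v => ‖v‖ ^ 2 / 2) μ) :
    ∫⁻ q, ENNReal.ofReal (|⟪q.1.1 - q.1.2, (q.2 : E)⟫| / 2) ∂((μ.prod μ).prod σ)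
      ≤ ENNReal.ofReal (σ.real Set.univ * (1 + 2 * ∫ v, ‖v‖ ^ 2 / 2 ∂μ)) := by
  let g : E × E → ℝ := fun p => 1 + ‖p.1‖ ^ 2 / 2 + ‖p.2‖ ^ 2 / 2
  have hfst : Integrable (fun p : E × E => 1 + ‖p.1‖ ^ 2 / 2) (μ.prod μ) :=
    (integrable_const 1).add (hmom.comp_fst μ)
  have hsnd : Integrable (fun p : E × E => ‖p.2‖ ^ 2 / 2) (μ.prod μ) := hmom.comp_snd μ
  have hg : Integrable g (μ.prod μ) := hfst.add hsnd
  have hg_integral : ∫ p, g p ∂(μ.prod μ) = 1 + 2 * ∫ v, ‖v‖ ^ 2 / 2 ∂μ := by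
    rw [integral_add hfst hsnd, integral_add (integrable_const 1) (hmom.comp_fst μ),
      integral_fun_fst (fun v => ‖v‖ ^ 2 / 2), integral_fun_snd (fun v => ‖v‖ ^ 2 / 2)]
    simp only [integral_const, probReal_univ, one_smul]
    ring
  calc ∫⁻ q, ENNReal.ofReal (|⟪q.1.1 - q.1.2, (q.2 : E)⟫| / 2) ∂((μ.prod μ).prod σ)
      ≤ ∫⁻ q, ENNReal.ofReal (g q.1) ∂((μ.prod μ).prod σ) :=
        lintegral_mono fun q => ENNReal.ofReal_le_ofReal <|
          half_abs_inner_sub_le q.1.1 q.1.2 (norm_eq_of_mem_sphere q.2)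
    _ = ENNReal.ofReal (∫ q, g q.1 ∂((μ.prod μ).prod σ)) :=
        (ofReal_integral_eq_lintegral_ofReal (hg.comp_fst σ)
          (ae_of_all _ fun q => by positivity)).symm
    _ = ENNReal.ofReal (σ.real Set.univ * (1 + 2 * ∫ v, ‖v‖ ^ 2 / 2 ∂μ)) := by
        rw [integral_fun_fst, hg_integral, smul_eq_mul]

lemma isFiniteMeasure_collisionFlux {d : ℕ} {T e : ℝ} {P : ℝ → Measure (Vel d)}
    (hPprob : ∀ t ∈ Set.Icc 0 T, IsProbabilityMeasure (P t))
    (hPmom : ∀ t ∈ Set.Icc 0 T, Integrable (fun v => ‖v‖ ^ 2 / 2) (P t))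
    (hPmomle : ∀ t ∈ Set.Icc 0 T, (∫ v, ‖v‖ ^ 2 / 2 ∂(P t)) ≤ e) :
    IsFiniteMeasure (collisionFlux d T P) := by
  let σ : Measure (Metric.sphere (0 : Vel d) 1) := (volume : Measure (Vel d)).toSphere
  let C : ℝ≥0∞ := (2⁻¹ : ℝ≥0∞) * ENNReal.ofReal (σ.real Set.univ * (1 + 2 * e))
  have hC : C < ⊤ := ENNReal.mul_lt_top (by simp) ENNReal.ofReal_lt_top
  refine ⟨(Measure.bind_apply_le _ MeasurableSet.univ).trans_lt ?_⟩
  refine lt_of_le_of_lt (b := ∫⁻ _ in Set.Icc 0 T, C) ?_ ?_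
  · refine setLIntegral_mono' measurableSet_Icc fun t ht => ?_
    have := hPprob t ht
    rw [Measure.smul_apply, smul_eq_mul]
    refine mul_le_mul_right ((Measure.bind_apply_le _ MeasurableSet.univ).trans ?_) _
    calc _ ≤ ENNReal.ofReal (σ.real Set.univ * (1 + 2 * ∫ v, ‖v‖ ^ 2 / 2 ∂(P t))) := by
          simpa using lintegral_half_abs_inner_sub_le (P t) σ (hPmom t ht)
      _ ≤ ENNReal.ofReal (σ.real Set.univ * (1 + 2 * e)) := by
          gcongr
          exact hPmomle t ht
  · rw [setLIntegral_const]
    exact ENNReal.mul_lt_top hC (by simp)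

end CollisionFlux

section Maxwellian

lemma llr_withDensity_exp {α : Type*} [MeasurableSpace α] {μ ν : Measure α} [SigmaFinite μ]
    [SigmaFinite ν] (hμν : μ ≪ ν) {f : α → ℝ} (hf : AEMeasurable f ν) :
    llr μ (ν.withDensity fun x => ENNReal.ofReal (Real.exp (f x)))
      =ᵐ[μ] fun x => llr μ ν x - f x := by
  have hrnDeriv := Measure.rnDeriv_withDensity_right μ ν
    (f := fun x => ENNReal.ofReal (Real.exp (f x))) (by fun_prop)
    (ae_of_all _ fun x => by simp [Real.exp_pos]) (ae_of_all _ fun x => ENNReal.ofReal_ne_top)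
  filter_upwards [hμν.ae_le hrnDeriv, Measure.rnDeriv_pos hμν,
    hμν.ae_le (Measure.rnDeriv_lt_top μ ν)] with x hx hpos hlt_top
  rw [llr, hx, ENNReal.toReal_mul, ENNReal.toReal_inv, ENNReal.toReal_ofReal (Real.exp_nonneg _),
    Real.log_mul (inv_ne_zero (Real.exp_ne_zero _)) (ENNReal.toReal_pos hpos.ne' hlt_top.ne).ne',
    Real.log_inv, Real.log_exp, llr]
  ring

lemma maxwellian_eq_withDensity_exp (d : ℕ) {e : ℝ} (he : 0 < e) :
    maxwellian d e = volume.withDensity fun v => ENNReal.ofReal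
      (Real.exp (-(d / 2 * Real.log (4 * Real.pi * e / d)) - d / (2 * e) * (‖v‖ ^ 2 / 2))) := by
  have hnorm : ((d / (2 * e)) / (2 * Real.pi)) ^ ((d : ℝ) / 2)
      = Real.exp (-(d / 2 * Real.log (4 * Real.pi * e / d))) := by
    rcases d.eq_zero_or_pos with rfl | hd
    · simp
    · have hinv : (d / (2 * e)) / (2 * Real.pi) = (4 * Real.pi * e / d)⁻¹ := by
        field_simp
        norm_num
      rw [hinv, Real.rpow_def_of_pos (by positivity), Real.log_inv]
      ring_nf
  simp only [maxwellian, hnorm, ← Real.exp_add]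
  ring_nf

lemma He_eq_Hfun_add {d : ℕ} {e : ℝ} (he : 0 < e) (μ : Measure (Vel d)) [IsProbabilityMeasure μ]
    (habs : μ ≪ volume)
    (hint : Integrable (fun v => Real.log ((μ.rnDeriv volume v).toReal)) μ)
    (hmom : Integrable (fun v => ‖v‖ ^ 2 / 2) μ) :
    He d e μ = Hfun μ + d / 2 * (Real.log (4 * Real.pi * e / d) + 1) := by
  let κ : ℝ := -(d / 2 * Real.log (4 * Real.pi * e / d))
  have hrel : ∫ v, llr μ (maxwellian d e) v ∂μ
      = Hfun μ - (κ - d / (2 * e) * ∫ v, ‖v‖ ^ 2 / 2 ∂μ) := by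
    have hllr : Integrable (llr μ volume) μ := hint
    have hmom' : Integrable (fun v => d / (2 * e) * (‖v‖ ^ 2 / 2)) μ := hmom.const_mul _
    have hlogM : Integrable (fun v => κ - d / (2 * e) * (‖v‖ ^ 2 / 2)) μ :=
      (integrable_const κ).sub hmom'
    rw [maxwellian_eq_withDensity_exp d he,
      integral_congr_ae (llr_withDensity_exp habs (by fun_prop)),
      integral_sub hllr hlogM,
      integral_sub (integrable_const κ) hmom', integral_const_mul, integral_const,
      probReal_univ, one_smul]
    rfl
  have hde : (d : ℝ) / (2 * e) * e = d / 2 := by field_simp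
  calc He d e μ
      = ∫ v, llr μ (maxwellian d e) v ∂μ + d / (2 * e) * (e - ∫ v, ‖v‖ ^ 2 / 2 ∂μ) := rfl
    _ = Hfun μ - κ + d / (2 * e) * e := by rw [hrel]; ring
    _ = Hfun μ + d / 2 * (Real.log (4 * Real.pi * e / d) + 1) := by rw [hde]; ring

end Maxwellian

lemma le_add_add_and_eq_iff_of_add_eq_add {a b : ℝ} {E₁ E₂ : EReal} (hE₁ : 0 ≤ E₁)
    (h : (a : EReal) + E₁ = b + E₂) :
    (a : EReal) ≤ b + E₁ + E₂ ∧ ((b : EReal) + E₁ + E₂ = a ↔ E₁ = 0) := by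
  have hsum : (b : EReal) + E₁ + E₂ = a + (E₁ + E₁) := by
    rw [add_right_comm, ← h, add_assoc]
  rw [hsum]
  refine ⟨le_add_of_nonneg_right (add_nonneg hE₁ hE₁), ?_⟩
  calc (a : EReal) + (E₁ + E₁) = a ↔ (a : EReal) + (E₁ + E₁) = a + 0 := by rw [add_zero]
    _ ↔ E₁ + E₁ = 0 := (EReal.addLECancellable_coe a).inj
    _ ↔ E₁ = 0 := by rw [add_eq_zero_iff_of_nonneg hE₁ hE₁, and_self]

theorem reverse_entropy_inequality_general
    (d : ℕ) (T e : ℝ) (hT : 0 ≤ T) (he : 0 < e)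
    (P : ℝ → Measure (Vel d)) (Q : Measure (Coll d)) [IsFiniteMeasure Q]
    (hPmeas : Measurable P)
    (hPprob : ∀ t ∈ Set.Icc 0 T, IsProbabilityMeasure (P t))
    (hPmom : ∀ t ∈ Set.Icc 0 T, Integrable (fun v => ‖v‖ ^ 2 / 2) (P t))
    (hPmomle : ∀ t ∈ Set.Icc 0 T, (∫ v, ‖v‖ ^ 2 / 2 ∂(P t)) ≤ e)
    (habs0 : P 0 ≪ volume) (habsT : P T ≪ volume)
    (hint0 : Integrable (fun v => Real.log (((P 0).rnDeriv volume v).toReal)) (P 0))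
    (hintT : Integrable (fun v => Real.log (((P T).rnDeriv volume v).toReal)) (P T))
    (hEB : ((He d e (P 0) : ℝ) : EReal) + Efun Q (collisionFlux d T P)
        = ((He d e (P T) : ℝ) : EReal) + Efun Q ((collisionFlux d T P).map (ups d))) :
    ((Hfun (P 0) : ℝ) : EReal)
        ≤ ((Hfun (P T) : ℝ) : EReal) + Efun Q (collisionFlux d T P)
            + Efun Q ((collisionFlux d T P).map (ups d)) ∧
    (((Hfun (P T) : ℝ) : EReal) + Efun Q (collisionFlux d T P)
            + Efun Q ((collisionFlux d T P).map (ups d)) = ((Hfun (P 0) : ℝ) : EReal)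
      ↔ Q = collisionFlux d T P) := by
  have h0 : (0 : ℝ) ∈ Set.Icc 0 T := Set.left_mem_Icc.2 hT
  have h1 : T ∈ Set.Icc 0 T := Set.right_mem_Icc.2 hT
  have := hPprob 0 h0
  have := hPprob T h1
  have := isFiniteMeasure_collisionFlux hPprob hPmom hPmomle
  have hbalance : (Hfun (P 0) : EReal) + Efun Q (collisionFlux d T P)
      = Hfun (P T) + Efun Q ((collisionFlux d T P).map (ups d)) := by
    rw [He_eq_Hfun_add he (P 0) habs0 hint0 (hPmom 0 h0),
      He_eq_Hfun_add he (P T) habsT hintT (hPmom T h1), EReal.coe_add, EReal.coe_add,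
      add_right_comm, add_right_comm (Hfun (P T) : EReal)] at hEB
    exact (EReal.addLECancellable_coe _).inj_left.1 hEB
  rw [← Efun_eq_zero_iff]
  exact le_add_add_and_eq_iff_of_add_eq_add (Efun_nonneg Q _) hbalance

/-- Proposition 2.3: for `(P,Q) ∈ S_e` with `H(P_0) < ∞` satisfying the entropy balance
`H_e(P_0) + E(Q | Q^{P⊗P}) = H_e(P_T) + E(Q | Υ_# Q^{P⊗P})` with both sides finite,
one has `H(P_T) + E(Q | Q^{P⊗P}) + E(Q | Υ_# Q^{P⊗P}) ≥ H(P_0)`, with equality iff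
`Q = Q^{P⊗P}`. -/
theorem reverse_entropy_inequality
    (d : ℕ) (hd : 0 < d) (T e : ℝ) (hT : 0 < T) (he : 0 < e)
    (P : ℝ → Measure (Vel d)) (Q : Measure (Coll d)) [IsFiniteMeasure Q]
    (hPmeas : Measurable P)
    -- `(P, Q) ∈ S_e` : `P` is a weakly continuous path in `P_e` ...
    (hPprob : ∀ t ∈ Set.Icc 0 T, IsProbabilityMeasure (P t))
    (hPcont : ∀ φ : BoundedContinuousFunction (Vel d) ℝ,
      ContinuousOn (fun t => ∫ v, φ v ∂(P t)) (Set.Icc 0 T))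
    (hPmom : ∀ t ∈ Set.Icc 0 T, Integrable (fun v => ‖v‖ ^ 2 / 2) (P t))
    (hPmomle : ∀ t ∈ Set.Icc 0 T, (∫ v, ‖v‖ ^ 2 / 2 ∂(P t)) ≤ e)
    (hPmean : ∀ t ∈ Set.Icc 0 T, (∫ v, v ∂(P t)) = 0)
    -- ... `Q` is symmetric ...
    (hQsymm₁ : Q.map (fun z : Coll d => (z.1, ((z.2.1.2, z.2.1.1), z.2.2))) = Q)
    (hQsymm₂ : Q.map (fun z : Coll d => (z.1, (z.2.1, (z.2.2.2, z.2.2.1)))) = Q)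
    -- ... and `(P, Q)` satisfies the balance equation
    (hbal : ∀ φ ψ : BoundedContinuousFunction (ℝ × Vel d) ℝ,
      (∀ v t, HasDerivAt (fun s => φ (s, v)) (ψ (t, v)) t) →
      (∫ v, φ (T, v) ∂(P T)) - (∫ v, φ (0, v) ∂(P 0))
          - (∫ t in Set.Icc 0 T, (∫ v, ψ (t, v) ∂(P t)))
        = ∫ z, (φ (z.1, z.2.2.1) + φ (z.1, z.2.2.2)
                  - φ (z.1, z.2.1.1) - φ (z.1, z.2.1.2)) ∂Q)
    -- finiteness of `H(P_0)` and `H(P_T)`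
    (habs0 : P 0 ≪ volume) (habsT : P T ≪ volume)
    (hint0 : Integrable (fun v => Real.log (((P 0).rnDeriv volume v).toReal)) (P 0))
    (hintT : Integrable (fun v => Real.log (((P T).rnDeriv volume v).toReal)) (P T))
    -- the entropy balance, with both sides finite
    (hEB : ((He d e (P 0) : ℝ) : EReal) + Efun Q (collisionFlux d T P)
        = ((He d e (P T) : ℝ) : EReal) + Efun Q ((collisionFlux d T P).map (ups d)))
    (hfin₁ : Efun Q (collisionFlux d T P) ≠ ⊤)
    (hfin₂ : Efun Q ((collisionFlux d T P).map (ups d)) ≠ ⊤) :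
    ((Hfun (P 0) : ℝ) : EReal)
        ≤ ((Hfun (P T) : ℝ) : EReal) + Efun Q (collisionFlux d T P)
            + Efun Q ((collisionFlux d T P).map (ups d)) ∧
    (((Hfun (P T) : ℝ) : EReal) + Efun Q (collisionFlux d T P)
            + Efun Q ((collisionFlux d T P).map (ups d)) = ((Hfun (P 0) : ℝ) : EReal)
      ↔ Q = collisionFlux d T P) :=
  reverse_entropy_inequality_general d T e hT.le he P Q hPmeas hPprob hPmom hPmomle habs0 habsT
    hint0 hintT hEB

end
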